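/- arXiv:0704.3054 — 4 statements merged into one kernel-verified Lean document; each statement's English description precedes it below -/
import Mathlib

section
/- Let A be an n×n positive definite Hermitian complex matrix and let E be an n×n positive semidefinite Hermitian complex matrix with E ≠ 0. Then A + E is invertible and trace((A + E)⁻¹) < trace(A⁻¹). (Strict decrease of the trace of the inverse when Fisher information is added; used in the paper's conclusion that tuning the relay frequency, γ = 1, strictly reduces the summed Cramér–Rao bound.) -/
open Matrix
open scoped ComplexOrder

/-- Adding a nonzero positive semidefinite Hermitian matrix to a positive definite
Hermitian matrix strictly decreases the trace of the inverse (the traces are real and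
compared in the complex order). -/
theorem trace_inv_strict_decrease {n : ℕ}
    (A E : Matrix (Fin n) (Fin n) ℂ)
    (hA : A.PosDef) (hE : E.PosSemidef) (hE0 : E ≠ 0) :
    IsUnit (A + E) ∧ ((A + E)⁻¹).trace < (A⁻¹).trace := by
  have hB : (A + E).PosDef := hA.add_posSemidef hE
  refine ⟨hB.isUnit, ?_⟩
  have hAd : IsUnit A.det := (Matrix.isUnit_iff_isUnit_det A).1 hA.isUnit
  have hBd : IsUnit (A + E).det := (Matrix.isUnit_iff_isUnit_det _).1 hB.isUnit
  have hM : (E + E * A⁻¹ * E).PosSemidef := by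
    have h := hA.inv.posSemidef.mul_mul_conjTranspose_same E
    rw [hE.isHermitian.eq] at h
    exact hE.add h
  have hD : (A⁻¹ - (A + E)⁻¹).PosSemidef := by
    have h := hM.mul_mul_conjTranspose_same (A + E)⁻¹
    rw [hB.inv.isHermitian.eq] at h
    have key : E + E * A⁻¹ * E = (A + E) * A⁻¹ * (A + E) - (A + E) := by
      have h1 : (A + E) * A⁻¹ = 1 + E * A⁻¹ := by
        rw [add_mul, Matrix.mul_nonsing_inv _ hAd]
      have h2 : E * A⁻¹ * A = E := by
        rw [Matrix.mul_assoc, Matrix.nonsing_inv_mul _ hAd, Matrix.mul_one]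
      rw [h1, add_mul, mul_add (E * A⁻¹), h2, one_mul]
      abel
    have eq : (A + E)⁻¹ * (E + E * A⁻¹ * E) * (A + E)⁻¹ = A⁻¹ - (A + E)⁻¹ := by
      rw [key, mul_sub, sub_mul, Matrix.nonsing_inv_mul _ hBd, one_mul,
        Matrix.mul_assoc (A + E), Matrix.nonsing_inv_mul_cancel_left _ _ hBd,
        Matrix.mul_nonsing_inv_cancel_right _ _ hBd]
    rwa [eq] at h
  have hne : A⁻¹ - (A + E)⁻¹ ≠ 0 := by
    intro h
    have h' := congrArg (·⁻¹) (sub_eq_zero.1 h)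
    simp only [Matrix.nonsing_inv_nonsing_inv _ hAd, Matrix.nonsing_inv_nonsing_inv _ hBd] at h'
    exact hE0 (by simpa using h')
  have hpos : 0 < (A⁻¹ - (A + E)⁻¹).trace :=
    lt_of_le_of_ne hD.trace_nonneg fun h => hne (hD.trace_eq_zero_iff.1 h.symm)
  rw [Matrix.trace_sub] at hpos
  exact sub_pos.1 hpos
end

section
/- Let Q > 0 and σ_r > 0. For σ_f > 0 set K(σ_f) := σ_r²/(4σ_f²) and define the 2×2 real matrix R(σ_f) := σ_f² · [[2, c(σ_f)], [c(σ_f), 2]] where c(σ_f) := (2Q + K(σ_f))/(Q + K(σ_f)). Then R(σ_f) is invertible for every σ_f > 0, and as σ_f → ∞, R(σ_f)⁻¹ converges to (2Q/σ_r²) · ζζᵀ, where ζ = (1, −1)ᵀ, i.e., to (2Q/σ_r²) · [[1, −1], [−1, 1]]. -/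
open Matrix Filter

/-- For the prior covariance `R(σ_f) = σ_f² [[2, c],[c, 2]]` with
`c = (2Q + K)/(Q + K)`, `K = σ_r²/(4σ_f²)`: `R(σ_f)` is invertible for all `σ_f > 0`,
and `R(σ_f)⁻¹ → (2Q/σ_r²) ζζᵀ` as `σ_f → ∞`, where `ζ = (1, −1)ᵀ`. -/
theorem prior_covariance_inverse_limit (Q σr : ℝ) (hQ : 0 < Q) (hσr : 0 < σr)
    (K c : ℝ → ℝ) (R : ℝ → Matrix (Fin 2) (Fin 2) ℝ)
    (hK : ∀ σf, K σf = σr ^ 2 / (4 * σf ^ 2))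
    (hc : ∀ σf, c σf = (2 * Q + K σf) / (Q + K σf))
    (hR : ∀ σf, R σf = σf ^ 2 • !![2, c σf; c σf, 2]) :
    (∀ σf : ℝ, 0 < σf → IsUnit (R σf)) ∧
    Tendsto (fun σf => (R σf)⁻¹) atTop
      (nhds ((2 * Q / σr ^ 2) • !![1, -1; -1, 1])) := by
  have key : ∀ σf : ℝ, 0 < σf → R σf *
      !![8 * (Q + K σf) ^ 2 / (σr ^ 2 * (4 * Q + 3 * K σf)),
        -(4 * (Q + K σf) * (2 * Q + K σf) / (σr ^ 2 * (4 * Q + 3 * K σf)));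
        -(4 * (Q + K σf) * (2 * Q + K σf) / (σr ^ 2 * (4 * Q + 3 * K σf))),
        8 * (Q + K σf) ^ 2 / (σr ^ 2 * (4 * Q + 3 * K σf))] = 1 := by
    intro s hs
    have hKp : 0 < K s := by rw [hK]; positivity
    have hr : σr ^ 2 = 4 * s ^ 2 * K s := by rw [hK]; field_simp
    rw [hR, hc, hr]
    generalize K s = k at hKp
    have h1 : Q + k ≠ 0 := by positivity
    have h2 : 4 * Q + 3 * k ≠ 0 := by positivity
    ext i j
    fin_cases i <;> fin_cases j <;>
      simp [Matrix.mul_apply, Fin.sum_univ_two] <;> field_simp <;> ring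
  refine ⟨fun s hs => IsUnit.of_mul_eq_one _ (key s hs), ?_⟩
  have hK0 : Tendsto K atTop (nhds 0) := by
    have : K = fun s => σr ^ 2 / (4 * s ^ 2) := funext hK
    rw [this]
    exact Tendsto.div_atTop tendsto_const_nhds
      ((tendsto_pow_atTop (two_ne_zero)).const_mul_atTop (by norm_num))
  have hden : σr ^ 2 * (4 * Q + 3 * 0) ≠ 0 := by positivity
  have hdt : Tendsto (fun s => σr ^ 2 * (4 * Q + 3 * K s)) atTop
      (nhds (σr ^ 2 * (4 * Q + 3 * 0))) :=
    ((hK0.const_mul 3).const_add (4 * Q)).const_mul (σr ^ 2)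
  have ha : Tendsto (fun s => 8 * (Q + K s) ^ 2 / (σr ^ 2 * (4 * Q + 3 * K s))) atTop
      (nhds (2 * Q / σr ^ 2)) := by
    have := (((hK0.const_add Q).pow 2).const_mul 8).div hdt hden
    have e : 2 * Q / σr ^ 2 = 8 * (Q + 0) ^ 2 / (σr ^ 2 * (4 * Q + 3 * 0)) := by
      simp only [add_zero, mul_zero]
      field_simp
      ring
    rw [e]
    exact this
  have hb : Tendsto (fun s => -(4 * (Q + K s) * (2 * Q + K s) / (σr ^ 2 * (4 * Q + 3 * K s))))
      atTop (nhds (-(2 * Q / σr ^ 2))) := by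
    have := ((((hK0.const_add Q).const_mul 4).mul (hK0.const_add (2 * Q))).div hdt hden).neg
    have e : -(2 * Q / σr ^ 2) = -(4 * (Q + 0) * (2 * Q + 0) / (σr ^ 2 * (4 * Q + 3 * 0))) := by
      simp only [add_zero, mul_zero]
      field_simp
    rw [e]
    exact this
  have hev := (eventually_gt_atTop (0 : ℝ)).mono
    fun s hs => (Matrix.inv_eq_right_inv (key s hs)).symm
  refine Tendsto.congr' hev ?_
  refine tendsto_pi_nhds.2 fun i => tendsto_pi_nhds.2 fun j => ?_
  fin_cases i <;> fin_cases j
  · simpa using ha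
  · simpa using hb
  · simpa using hb
  · simpa using ha
end

section
/- Let a > 0 and A, B > 0. For γ ∈ ℝ and σ_f > 0, with s := 1/σ_f², define the 2×2 real matrix R(γ, σ_f) := σ_f² · [[2, (a(1+γ)+s)/(a+s)], [(a(1+γ)+s)/(a+s), 2(a(1−γ+γ²)+s)/(a+s)]], let Δ := diag(A, B), and let T(γ, σ_f) := trace((Δ + R(γ, σ_f)⁻¹)⁻¹). Then: (i) for every fixed γ ≠ 1, lim_{σ_f → ∞} T(γ, σ_f) = 1/A + 1/B; (ii) lim_{σ_f → ∞} T(1, σ_f) = trace((Δ + (a/2)·ζζᵀ)⁻¹) where ζ = (1, −1)ᵀ, and this limit is strictly less than 1/A + 1/B. (This makes precise the paper's claim that as σ_f → ∞ the optimal relay adjustment parameter is γ_opt = 1: in the uninformative-prior limit only γ = 1 strictly reduces the summed Cramér–Rao bound below the unaided value.) -/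
open Matrix Filter


lemma trace_inv_two (x y z w : ℝ) :
    ((!![x, y; z, w] : Matrix (Fin 2) (Fin 2) ℝ)⁻¹).trace = (x + w) / (x * w - y * z) := by
  rw [Matrix.inv_def, Matrix.adjugate_fin_two_of, Matrix.det_fin_two_of, Ring.inverse_eq_inv',
    Matrix.trace_smul, Matrix.trace_fin_two_of, smul_eq_mul]
  rw [div_eq_inv_mul, add_comm w x]

lemma T_formula (A B v p q : ℝ) (hv : v ≠ 0) :
    (((!![A, 0; 0, B] : Matrix (Fin 2) (Fin 2) ℝ) + (v • !![2, p; p, q])⁻¹)⁻¹).trace =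
      (A + (1 / v / (2 * q - p * p)) * q + (B + (1 / v / (2 * q - p * p)) * 2)) /
      ((A + (1 / v / (2 * q - p * p)) * q) * (B + (1 / v / (2 * q - p * p)) * 2) -
        ((1 / v / (2 * q - p * p)) * p) * ((1 / v / (2 * q - p * p)) * p)) := by
  have h : (v • (!![2, p; p, q] : Matrix (Fin 2) (Fin 2) ℝ))⁻¹ =
      (1 / v / (2 * q - p * p)) • !![q, -p; -p, 2] := by
    rw [Matrix.inv_def, Matrix.adjugate_smul, Matrix.adjugate_fin_two_of, Matrix.det_smul,
      Matrix.det_fin_two_of, Ring.inverse_eq_inv', smul_smul]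
    congr 1
    simp only [Fintype.card_fin, Nat.add_one_sub_one, pow_one, mul_inv, div_eq_mul_inv, one_mul]
    field_simp
  rw [h]
  have h2 (c : ℝ) : (!![A, 0; 0, B] : Matrix (Fin 2) (Fin 2) ℝ) + c • !![q, -p; -p, 2] =
      !![A + c * q, -(c * p); -(c * p), B + c * 2] := by
    ext i j; fin_cases i <;> fin_cases j <;> simp
  rw [h2, trace_inv_two]
  congr 1
  ring

lemma T_tendsto (A B : ℝ) (c p q : ℝ → ℝ) (c0 p0 q0 : ℝ)
    (hc : Tendsto c atTop (nhds c0)) (hp : Tendsto p atTop (nhds p0))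
    (hq : Tendsto q atTop (nhds q0))
    (hne : (A + c0 * q0) * (B + c0 * 2) - (c0 * p0) * (c0 * p0) ≠ 0) :
    Tendsto (fun t => (A + c t * q t + (B + c t * 2)) /
      ((A + c t * q t) * (B + c t * 2) - (c t * p t) * (c t * p t))) atTop
      (nhds ((A + c0 * q0 + (B + c0 * 2)) /
      ((A + c0 * q0) * (B + c0 * 2) - (c0 * p0) * (c0 * p0)))) := by
  have h1 := (hc.mul hq).const_add A
  have h2 := (hc.mul_const 2).const_add B
  have h3 := hc.mul hp
  exact (h1.add h2).div ((h1.mul h2).sub (h3.mul h3)) hne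

/-- In the uninformative-prior limit `σ_f → ∞`: for fixed `γ ≠ 1` the summed CRB
`T(γ, σ_f) = tr((Δ + R(γ,σ_f)⁻¹)⁻¹)` tends to the unaided value `1/A + 1/B`, whereas for
`γ = 1` it tends to `tr((Δ + (a/2) ζζᵀ)⁻¹)`, which is strictly smaller than `1/A + 1/B`. -/
theorem gamma_one_optimal_large_sigma (a A B : ℝ) (ha : 0 < a) (hA : 0 < A) (hB : 0 < B)
    (s : ℝ → ℝ) (hs : ∀ σf, s σf = 1 / σf ^ 2)
    (R : ℝ → ℝ → Matrix (Fin 2) (Fin 2) ℝ)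
    (hR : ∀ γ σf, R γ σf = σf ^ 2 •
      !![2, (a * (1 + γ) + s σf) / (a + s σf);
         (a * (1 + γ) + s σf) / (a + s σf), 2 * (a * (1 - γ + γ ^ 2) + s σf) / (a + s σf)])
    (Δ : Matrix (Fin 2) (Fin 2) ℝ) (hΔ : Δ = !![A, 0; 0, B])
    (T : ℝ → ℝ → ℝ) (hT : ∀ γ σf, T γ σf = ((Δ + (R γ σf)⁻¹)⁻¹).trace) :
    (∀ γ : ℝ, γ ≠ 1 → Tendsto (fun σf => T γ σf) atTop (nhds (1 / A + 1 / B))) ∧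
    Tendsto (fun σf => T 1 σf) atTop
      (nhds (((Δ + (a / 2) • !![1, -1; -1, 1])⁻¹).trace)) ∧
    ((Δ + (a / 2) • !![1, -1; -1, 1])⁻¹).trace < 1 / A + 1 / B := by
  have hs0 : Tendsto s atTop (nhds 0) := by
    have : s = fun x => 1 / x ^ 2 := funext hs
    rw [this]
    simpa using tendsto_pow_neg_atTop (𝕜 := ℝ) (n := 2) (by norm_num)
  have hlim : (Δ + (a / 2) • !![1, -1; -1, 1]) =
      !![A + a / 2, -(a / 2); -(a / 2), B + a / 2] := by
    rw [hΔ]; ext i j; fin_cases i <;> fin_cases j <;> simp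
  have hden : Tendsto (fun t => a + s t) atTop (nhds a) := by
    simpa using hs0.const_add a
  have hp : ∀ γ : ℝ, Tendsto (fun t => (a * (1 + γ) + s t) / (a + s t)) atTop
      (nhds (1 + γ)) := by
    intro γ
    have := (hs0.const_add (a * (1 + γ))).div hden ha.ne'
    rwa [show (a * (1 + γ) + 0) / a = 1 + γ by field_simp; ring] at this
  have hq : ∀ γ : ℝ, Tendsto (fun t => 2 * (a * (1 - γ + γ ^ 2) + s t) / (a + s t)) atTop
      (nhds (2 * (1 - γ + γ ^ 2))) := by
    intro γ
    have := ((hs0.const_add (a * (1 - γ + γ ^ 2))).const_mul 2).div hden ha.ne'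
    rwa [show 2 * (a * (1 - γ + γ ^ 2) + 0) / a = 2 * (1 - γ + γ ^ 2) by
      field_simp; ring] at this
  have key : ∀ γ c0 : ℝ, Tendsto (fun t => s t /
      (2 * (2 * (a * (1 - γ + γ ^ 2) + s t) / (a + s t)) -
        (a * (1 + γ) + s t) / (a + s t) * ((a * (1 + γ) + s t) / (a + s t)))) atTop (nhds c0) →
      (A + c0 * (2 * (1 - γ + γ ^ 2))) * (B + c0 * 2) - (c0 * (1 + γ)) * (c0 * (1 + γ)) ≠ 0 →
      Tendsto (fun t => T γ t) atTop (nhds ((A + c0 * (2 * (1 - γ + γ ^ 2)) + (B + c0 * 2)) /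
      ((A + c0 * (2 * (1 - γ + γ ^ 2))) * (B + c0 * 2) -
        (c0 * (1 + γ)) * (c0 * (1 + γ))))) := by
    intro γ c0 hc hne
    refine (T_tendsto A B _ _ _ c0 _ _ hc (hp γ) (hq γ) hne).congr' ?_
    filter_upwards [eventually_gt_atTop 0] with t ht
    rw [hT, hR, hΔ, T_formula _ _ _ _ _ (by positivity), ← hs t]
  refine ⟨?_, ?_, ?_⟩
  · intro γ hγ
    have h3 : 2 * (2 * (1 - γ + γ ^ 2)) - (1 + γ) * (1 + γ) ≠ 0 := by
      have : (γ - 1) ^ 2 ≠ 0 := pow_ne_zero 2 (sub_ne_zero.mpr hγ)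
      intro h; apply this; linarith
    have hc := hs0.div (((hq γ).const_mul 2).sub ((hp γ).mul (hp γ))) h3
    rw [zero_div] at hc
    have := key γ 0 hc (by simp [hA.ne', hB.ne'])
    convert this using 2
    field_simp
    ring
  · have hc : Tendsto (fun t => (a + s t) ^ 2 / (4 * a + 3 * s t)) atTop (nhds (a / 4)) := by
      have := (hden.pow 2).div ((hs0.const_mul 3).const_add (4 * a)) (by positivity)
      rwa [show a ^ 2 / (4 * a + 3 * 0) = a / 4 by field_simp; ring] at this
    have := key 1 (a / 4) (hc.congr' ?_) ?_
    · rw [hlim, trace_inv_two]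
      convert this using 2
      congr 1 <;> ring
    · filter_upwards [eventually_gt_atTop 0] with t ht
      have hst : 0 < s t := by rw [hs]; positivity
      generalize s t = u at hst
      have e : 2 * (2 * (a * (1 - 1 + 1 ^ 2) + u) / (a + u)) -
        (a * (1 + 1) + u) / (a + u) * ((a * (1 + 1) + u) / (a + u)) =
          u * (4 * a + 3 * u) / (a + u) ^ 2 := by
        field_simp
        ring
      rw [e]
      field_simp
    · have : 0 < A * B + a / 2 * (A + B) := by positivity
      intro h; linarith
  · rw [hlim, trace_inv_two, div_add_div _ _ hA.ne' hB.ne', div_lt_div_iff₀ _ (by positivity)]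
    · nlinarith [mul_pos ha (mul_pos hA hA), mul_pos ha (mul_pos hB hB)]
    · have : 0 < A * B + a / 2 * (A + B) := by positivity
      linarith
end

section
/- Let a > 0 and A, B > 0. For γ ∈ ℝ and σ_f > 0, with s := 1/σ_f², define R(γ, σ_f) := σ_f² · [[2, (a(1+γ)+s)/(a+s)], [(a(1+γ)+s)/(a+s), 2(a(1−γ+γ²)+s)/(a+s)]], Δ := diag(A, B), and T(γ, σ_f) := trace((Δ + R(γ, σ_f)⁻¹)⁻¹). Then for every fixed γ ∈ ℝ, lim_{σ_f → 0⁺} (T(γ, σ_f) − T(1/2, σ_f)) / σ_f⁴ = 2a·(γ − 1/2)². (This makes precise the paper's claim that when σ_f → 0 the Cramér–Rao bound is minimized at γ = 1/2: to leading order in σ_f, the excess summed CRB is a positive multiple of (γ − 1/2)².) -/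
open Matrix Filter

lemma trace_aux (A B r t w : ℝ) (hD : r * w - t * t ≠ 0) :
    ((!![A, 0; 0, B] + (!![r, t; t, w] : Matrix (Fin 2) (Fin 2) ℝ)⁻¹)⁻¹).trace
      = ((r * w - t * t) * (A + B) + (r + w)) /
        ((r * w - t * t) * (A * B) + A * r + B * w + 1) := by
  have h1 : (!![A, 0; 0, B] + (!![r, t; t, w] : Matrix (Fin 2) (Fin 2) ℝ)⁻¹)
      = !![A + w / (r * w - t * t), -t / (r * w - t * t);
           -t / (r * w - t * t), B + r / (r * w - t * t)] := by
    rw [Matrix.inv_def, Matrix.det_fin_two_of, Matrix.adjugate_fin_two_of, Ring.inverse_eq_inv']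
    ext i j
    fin_cases i <;> fin_cases j <;> simp <;> ring
  rw [h1, Matrix.inv_def, Matrix.det_fin_two_of, Matrix.adjugate_fin_two_of, Ring.inverse_eq_inv',
    Matrix.trace_smul, Matrix.trace_fin_two_of, smul_eq_mul]
  obtain ⟨D, hDD⟩ : ∃ D, D = r * w - t * t := ⟨_, rfl⟩
  rw [← hDD] at hD ⊢
  have h2 : (A + w / D) * (B + r / D)
      - -t / D * (-t / D)
      = (D * (A * B) + A * r + B * w + 1) / D := by
    field_simp
    linear_combination -hDD
  have h3 : B + r / D + (A + w / D)
      = (D * (A + B) + (r + w)) / D := by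
    field_simp
    ring
  rw [h2, h3, ← div_eq_inv_mul, div_div_div_cancel_right₀ hD]

/-- Off-diagonal entry (scaled). -/
noncomputable def pp (a γ σ : ℝ) : ℝ := 1 + a * γ * σ ^ 2 / (1 + a * σ ^ 2)

/-- Lower diagonal entry (scaled). -/
noncomputable def qq (a γ σ : ℝ) : ℝ := 2 + 2 * a * (γ ^ 2 - γ) * σ ^ 2 / (1 + a * σ ^ 2)

/-- Scaled determinant. -/
noncomputable def dd (a γ σ : ℝ) : ℝ := 2 * qq a γ σ - pp a γ σ ^ 2

/-- Denominator. -/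
noncomputable def EE (a A B γ σ : ℝ) : ℝ :=
  1 + σ ^ 2 * (2 * A + B * qq a γ σ) + σ ^ 4 * dd a γ σ * (A * B)

/-- Scaled numerator. -/
noncomputable def nn (a A B γ σ : ℝ) : ℝ := σ ^ 2 * dd a γ σ * (A + B) + 2 + qq a γ σ

lemma den_ne (a σ : ℝ) (ha : 0 < a) : 1 + a * σ ^ 2 ≠ 0 := by positivity

lemma pp_cont (a γ : ℝ) (ha : 0 < a) : Continuous (pp a γ) := by
  unfold pp
  exact continuous_const.add (Continuous.div (by fun_prop) (by fun_prop) fun σ => den_ne a σ ha)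

lemma qq_cont (a γ : ℝ) (ha : 0 < a) : Continuous (qq a γ) := by
  unfold qq
  exact continuous_const.add (Continuous.div (by fun_prop) (by fun_prop) fun σ => den_ne a σ ha)

lemma dd_cont (a γ : ℝ) (ha : 0 < a) : Continuous (dd a γ) := by
  have := pp_cont a γ ha
  have := qq_cont a γ ha
  unfold dd
  fun_prop

lemma EE_cont (a A B γ : ℝ) (ha : 0 < a) : Continuous (EE a A B γ) := by
  have := dd_cont a γ ha
  have := qq_cont a γ ha
  unfold EE
  fun_prop

lemma nn_cont (a A B γ : ℝ) (ha : 0 < a) : Continuous (nn a A B γ) := by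
  have := dd_cont a γ ha
  have := qq_cont a γ ha
  unfold nn
  fun_prop

/-- In the strong-prior limit `σ_f → 0⁺`, the excess summed CRB satisfies
`(T(γ, σ_f) − T(1/2, σ_f))/σ_f⁴ → 2a(γ − 1/2)²`, so `γ = 1/2` minimizes the CRB to
leading order. -/
theorem gamma_half_optimal_small_sigma (a A B : ℝ) (ha : 0 < a) (hA : 0 < A) (hB : 0 < B)
    (s : ℝ → ℝ) (hs : ∀ σf, s σf = 1 / σf ^ 2)
    (R : ℝ → ℝ → Matrix (Fin 2) (Fin 2) ℝ)
    (hR : ∀ γ σf, R γ σf = σf ^ 2 •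
      !![2, (a * (1 + γ) + s σf) / (a + s σf);
         (a * (1 + γ) + s σf) / (a + s σf), 2 * (a * (1 - γ + γ ^ 2) + s σf) / (a + s σf)])
    (Δ : Matrix (Fin 2) (Fin 2) ℝ) (hΔ : Δ = !![A, 0; 0, B])
    (T : ℝ → ℝ → ℝ) (hT : ∀ γ σf, T γ σf = ((Δ + (R γ σf)⁻¹)⁻¹).trace) :
    ∀ γ : ℝ,
      Tendsto (fun σf => (T γ σf - T (1 / 2) σf) / σf ^ 4)
        (nhdsWithin 0 (Set.Ioi 0)) (nhds (2 * a * (γ - 1 / 2) ^ 2)) := by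
  have key : ∀ γ σ : ℝ, 0 < σ → dd a γ σ ≠ 0 →
      T γ σ = σ ^ 2 * nn a A B γ σ / EE a A B γ σ := by
    intro γ σ hσ hd
    have hden := den_ne a σ ha
    have hσ0 : σ ≠ 0 := hσ.ne'
    have hsum : a + 1 / σ ^ 2 ≠ 0 := by positivity
    have e1 : (a * (1 + γ) + 1 / σ ^ 2) / (a + 1 / σ ^ 2) = pp a γ σ := by
      have hden' : a * σ ^ 2 + 1 ≠ 0 := by positivity
      unfold pp
      field_simp
      ring
    have e2 : 2 * (a * (1 - γ + γ ^ 2) + 1 / σ ^ 2) / (a + 1 / σ ^ 2) = qq a γ σ := by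
      have hden' : a * σ ^ 2 + 1 ≠ 0 := by positivity
      unfold qq
      field_simp
      ring
    have e3 : R γ σ = !![σ ^ 2 * 2, σ ^ 2 * pp a γ σ; σ ^ 2 * pp a γ σ, σ ^ 2 * qq a γ σ] := by
      rw [hR, hs, e1, e2]
      ext i j
      fin_cases i <;> fin_cases j <;> simp
    have e4 : σ ^ 2 * 2 * (σ ^ 2 * qq a γ σ) - σ ^ 2 * pp a γ σ * (σ ^ 2 * pp a γ σ)
        = σ ^ 4 * dd a γ σ := by
      unfold dd
      ring
    rw [hT, hΔ, e3, trace_aux _ _ _ _ _ (by rw [e4]; positivity), e4]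
    unfold nn EE
    congr 1 <;> ring
  intro γ
  have d0 : ∀ γ, dd a γ 0 = 3 := by intro γ; simp [dd, pp, qq]; norm_num
  have E0 : ∀ γ, EE a A B γ 0 = 1 := by intro γ; simp [EE]
  have hdne : ∀ γ, ∀ᶠ σ in nhdsWithin (0:ℝ) (Set.Ioi 0), dd a γ σ ≠ 0 := fun γ =>
    ((dd_cont a γ ha).continuousAt.eventually_ne (by rw [d0]; norm_num)).filter_mono
      nhdsWithin_le_nhds
  have hEne : ∀ γ, ∀ᶠ σ in nhdsWithin (0:ℝ) (Set.Ioi 0), EE a A B γ σ ≠ 0 := fun γ =>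
    ((EE_cont a A B γ ha).continuousAt.eventually_ne (by rw [E0]; norm_num)).filter_mono
      nhdsWithin_le_nhds
  let G : ℝ → ℝ := fun σ =>
    (((dd a γ σ - dd a (1 / 2) σ) * (A + B) + 2 * a * (γ - 1 / 2) ^ 2 / (1 + a * σ ^ 2))
        * EE a A B (1 / 2) σ
      - nn a A B (1 / 2) σ * σ ^ 2 *
        (B * (2 * a * (γ - 1 / 2) ^ 2 / (1 + a * σ ^ 2)) + A * B * (dd a γ σ - dd a (1 / 2) σ)))
      / (EE a A B γ σ * EE a A B (1 / 2) σ)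
  have hG0 : G 0 = 2 * a * (γ - 1 / 2) ^ 2 := by
    simp only [G, d0, E0]
    norm_num
  have hGc : ContinuousAt G 0 := by
    have c1 := dd_cont a γ ha
    have c2 := dd_cont a (1 / 2) ha
    have c3 := EE_cont a A B γ ha
    have c4 := EE_cont a A B (1 / 2) ha
    have c5 := nn_cont a A B (1 / 2) ha
    have c6 : Continuous fun σ : ℝ => 2 * a * (γ - 1 / 2) ^ 2 / (1 + a * σ ^ 2) :=
      Continuous.div (by fun_prop) (by fun_prop) fun σ => den_ne a σ ha
    refine ContinuousAt.div (Continuous.continuousAt ?_) (Continuous.continuousAt ?_) ?_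
    · exact (((c1.sub c2).mul continuous_const).add c6 |>.mul c4).sub
        ((c5.mul (continuous_id.pow 2)).mul
          ((continuous_const.mul c6).add (continuous_const.mul (c1.sub c2))))
    · exact c3.mul c4
    · simp [E0]
  have hlim : Tendsto G (nhdsWithin 0 (Set.Ioi 0)) (nhds (2 * a * (γ - 1 / 2) ^ 2)) := by
    rw [← hG0]
    exact hGc.tendsto.mono_left nhdsWithin_le_nhds
  refine hlim.congr' ?_
  filter_upwards [hdne γ, hdne (1 / 2), hEne γ, hEne (1 / 2), self_mem_nhdsWithin]
    with σ h1 h2 h3 h4 hσ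
  have hσ' : (0:ℝ) < σ := hσ
  have hσ0 : σ ≠ 0 := hσ'.ne'
  rw [key γ σ hσ' h1, key (1 / 2) σ hσ' h2, div_sub_div _ _ h3 h4, div_div,
    mul_comm (EE a A B γ σ * EE a A B (1 / 2) σ) (σ ^ 4), ← div_div]
  simp only [G]
  congr 1
  rw [eq_div_iff (by positivity)]
  have hq : qq a γ σ
      = qq a (1 / 2) σ + σ ^ 2 * (2 * a * (γ - 1 / 2) ^ 2 / (1 + a * σ ^ 2)) := by
    unfold qq
    ring
  generalize 2 * a * (γ - 1 / 2) ^ 2 / (1 + a * σ ^ 2) = k at *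
  unfold nn EE
  rw [hq]
  ring
end
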